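/- arXiv:1210.7182 — 6 statements merged into one kernel-verified Lean document; each statement's English description precedes it below -/
import Mathlib

section
/- Let ℓ be a prime number and r a natural number. Let s be a finite set and f : s → ℕ a function with Σ_{i∈s} f i = ℓ^r. Then ℓ does not divide the multinomial coefficient multinomial(s, f) if and only if there exists an index i ∈ s with f i = ℓ^r (so that f j = 0 for all j ≠ i); moreover, in that case multinomial(s, f) = 1. -/
/-- For a prime `ℓ` and `f : ι → ℕ` with `∑ i ∈ s, f i = ℓ ^ r`, the multinomial
coefficient `multinomial s f` is prime to `ℓ` iff `f` is concentrated at a single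
index `i ∈ s` with `f i = ℓ ^ r` (so `f j = 0` for all other `j ∈ s`), and in that
case the multinomial coefficient equals `1`. -/
theorem multinomial_not_dvd_iff_concentrated {ι : Type*} [DecidableEq ι]
    {ℓ : ℕ} (hℓ : ℓ.Prime) (r : ℕ) (s : Finset ι) (f : ι → ℕ)
    (hsum : ∑ i ∈ s, f i = ℓ ^ r) :
    (¬ ℓ ∣ Nat.multinomial s f ↔
      ∃ i ∈ s, f i = ℓ ^ r ∧ ∀ j ∈ s, j ≠ i → f j = 0) ∧
    ((∃ i ∈ s, f i = ℓ ^ r) → Nat.multinomial s f = 1) := by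
  have hz : ∀ i ∈ s, f i = ℓ ^ r → ∀ j ∈ s, j ≠ i → f j = 0 := by
    intro i hi hfi j hj hji
    have h := Finset.add_sum_erase s f hi
    have h0 : ∑ k ∈ s.erase i, f k = 0 := by omega
    exact Finset.sum_eq_zero_iff.mp h0 j (Finset.mem_erase.mpr ⟨hji, hj⟩)
  have h1 : (∃ i ∈ s, f i = ℓ ^ r) → Nat.multinomial s f = 1 := by
    rintro ⟨i, hi, hfi⟩
    have hspec := Nat.multinomial_spec s f
    have hp : ∏ k ∈ s, (f k).factorial = (ℓ ^ r).factorial := by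
      rw [Finset.prod_eq_single_of_mem i hi, hfi]
      intro j hj hji
      rw [hz i hi hfi j hj hji, Nat.factorial_zero]
    rw [hp, hsum] at hspec
    exact Nat.eq_of_mul_eq_mul_left (Nat.factorial_pos (ℓ ^ r)) (by rw [hspec, mul_one])
  refine ⟨⟨fun hnd => ?_, ?_⟩, h1⟩
  · have hne : ∑ i ∈ s, f i ≠ 0 := by
      rw [hsum]
      exact pow_ne_zero _ hℓ.ne_zero
    obtain ⟨i, hi, hi0⟩ := Finset.exists_ne_zero_of_sum_ne_zero hne
    have hfi : f i = ℓ ^ r := by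
      by_contra hc
      apply hnd
      have hm := Nat.multinomial_insert (Finset.notMem_erase i s) f
      rw [Finset.insert_erase hi, Finset.add_sum_erase s f hi, hsum] at hm
      rw [hm]
      exact Dvd.dvd.mul_right (hℓ.dvd_choose_pow hi0 hc) _
    exact ⟨i, hi, hfi, hz i hi hfi⟩
  · rintro ⟨i, hi, hfi, -⟩
    rw [h1 ⟨i, hi, hfi⟩]
    exact hℓ.not_dvd_one
end

section
/- Let R be a commutative ring, u : ℕ → Rˣ a sequence of units, and p : ℕ → MvPolynomial ℕ R a sequence of polynomials such that for every n the polynomial p n only involves the variables X m with m < n. Then the R-algebra endomorphism φ of MvPolynomial ℕ R determined by φ(X n) = (u n)·(X n) + p n is bijective, i.e., an R-algebra automorphism of MvPolynomial ℕ R. -/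
open MvPolynomial

/-- Images of the variables under the inverse, by recursion. -/
noncomputable def triInv {R : Type*} [CommRing R]
    (u : ℕ → Rˣ) (p : ℕ → MvPolynomial ℕ R) (n : ℕ) : MvPolynomial ℕ R :=
  ((u n)⁻¹ : Rˣ).val •
    (X n - aeval (fun m => if _h : m < n then triInv u p m else 0) (p n))
termination_by n

theorem algHom_congr_lt {R : Type*} [CommRing R]
    (f g : MvPolynomial ℕ R →ₐ[R] MvPolynomial ℕ R) (n : ℕ) (q : MvPolynomial ℕ R)
    (hq : q.vars ⊆ Finset.range n) (h : ∀ m < n, f (X m) = g (X m)) : f q = g q := by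
  refine hom_congr_vars (f₁ := (f : MvPolynomial ℕ R →+* MvPolynomial ℕ R))
    (f₂ := (g : MvPolynomial ℕ R →+* MvPolynomial ℕ R)) ?_ ?_ rfl
  · ext r : 1
    simp [← algebraMap_eq]
  · intro i hi _
    exact h i (Finset.mem_range.1 (hq hi))

theorem triInv_eq {R : Type*} [CommRing R]
    (u : ℕ → Rˣ) (p : ℕ → MvPolynomial ℕ R)
    (hp : ∀ n, (p n).vars ⊆ Finset.range n) (n : ℕ) :
    triInv u p n = ((u n)⁻¹ : Rˣ).val • (X n - aeval (triInv u p) (p n)) := by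
  rw [triInv]
  congr 2
  refine algHom_congr_lt _ _ n _ (hp n) fun m hm => ?_
  simp [hm]

/-- A triangular change of variables `X n ↦ uₙ • X n + pₙ`, where each `uₙ` is a
unit and `pₙ` only involves the variables `X m` with `m < n`, is an `R`-algebra
automorphism of the polynomial ring `R[X 0, X 1, X 2, …]`. -/
theorem triangular_aeval_bijective {R : Type*} [CommRing R]
    (u : ℕ → Rˣ) (p : ℕ → MvPolynomial ℕ R)
    (hp : ∀ n, (p n).vars ⊆ Finset.range n) :
    Function.Bijective
      (aeval (fun n => (u n : R) • X n + p n) :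
        MvPolynomial ℕ R →ₐ[R] MvPolynomial ℕ R) := by
  set φ : MvPolynomial ℕ R →ₐ[R] MvPolynomial ℕ R :=
    aeval (fun n => (u n : R) • X n + p n) with hφ
  have hX : ∀ n, φ (X n) = (u n : R) • X n + p n := fun n => by simp [hφ]
  have h1 : (aeval (triInv u p)).comp φ = AlgHom.id R _ := by
    ext1 n
    rw [AlgHom.comp_apply, hX, map_add, map_smul, aeval_X, triInv_eq u p hp, smul_smul,
      Units.mul_inv, one_smul, sub_add_cancel, AlgHom.id_apply]
  have h2 : φ.comp (aeval (triInv u p)) = AlgHom.id R _ := by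
    ext1 n
    induction n using Nat.strong_induction_on with
    | _ n ih =>
      have h := algHom_congr_lt _ _ n _ (hp n) ih
      rw [AlgHom.comp_apply, AlgHom.id_apply] at h
      rw [AlgHom.comp_apply, aeval_X, triInv_eq u p hp, map_smul, map_sub, h, hX,
        add_sub_cancel_right, smul_smul, Units.inv_mul, one_smul, AlgHom.id_apply]
  have h3 : Function.LeftInverse (aeval (triInv u p)) φ := fun x => by
    rw [← AlgHom.comp_apply, h1, AlgHom.id_apply]
  have h4 : Function.RightInverse (aeval (triInv u p)) φ := fun x => by
    rw [← AlgHom.comp_apply, h2, AlgHom.id_apply]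
  exact ⟨h3.injective, h4.surjective⟩
end

section
/- Let R be a nontrivial commutative ring, u : ℕ → Rˣ a sequence of units, and p : ℕ → MvPolynomial ℕ R a sequence of polynomials such that for every n the polynomial p n only involves the variables X m with m < n. Set x n = (u n)·(X n) + p n. Then for every k ∈ ℕ the list [x 0, x 1, …, x k] is a regular sequence in MvPolynomial ℕ R. -/
open MvPolynomial

theorem tri_ofList_X (R : Type*) [CommRing R] (j : ℕ) :
    Ideal.ofList ((List.range j).map fun n => (X n : MvPolynomial ℕ R)) =
      Ideal.span (X '' (Set.Iio j)) := by
  unfold Ideal.ofList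
  congr 1
  ext f
  simp

theorem tri_X_isRegular (R : Type*) [CommRing R] [Nontrivial R] (k : ℕ) :
    RingTheory.Sequence.IsRegular (MvPolynomial ℕ R)
      ((List.range k).map fun n => (X n : MvPolynomial ℕ R)) := by
  refine ⟨⟨fun i hi => ?_⟩, ?_⟩
  · have hik : i < k := by simpa using hi
    rw [isSMulRegular_quotient_iff_mem_of_smul_mem]
    intro f hf
    rw [← List.map_take, List.take_range, min_eq_left hik.le, tri_ofList_X, smul_eq_mul,
      Ideal.mul_top, mem_ideal_span_X_image] at hf ⊢
    intro m hm
    obtain ⟨a, ha, hma⟩ := hf (m + Finsupp.single i 1) (by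
      simp only [List.getElem_map, List.getElem_range, smul_eq_mul, mem_support_iff]
      rw [add_comm, coeff_X_mul]
      exact mem_support_iff.1 hm)
    refine ⟨a, ha, ?_⟩
    have : i ≠ a := (ne_of_lt ha).symm
    simpa [Finsupp.single_apply, this] using hma
  · intro h
    rw [tri_ofList_X, smul_eq_mul, Ideal.mul_top] at h
    have h1 : (1 : MvPolynomial ℕ R) ∈ Ideal.span (X '' (Set.Iio k)) := h ▸ Submodule.mem_top
    rw [mem_ideal_span_X_image] at h1
    obtain ⟨a, -, ha⟩ := h1 0 (by simp)
    simp at ha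

theorem triInv_spec {R : Type*} [CommRing R] (u : ℕ → Rˣ) (p : ℕ → MvPolynomial ℕ R)
    (hp : ∀ n, (p n).vars ⊆ Finset.range n) (n : ℕ) :
    aeval (triInv u p) ((u n : R) • X n + p n) = X n := by
  have h : aeval (triInv u p) (p n) =
      aeval (fun m => if _h : m < n then triInv u p m else 0) (p n) := by
    refine eval₂Hom_congr' rfl (fun i hi _ => ?_) rfl
    have : i < n := Finset.mem_range.1 (hp n hi)
    simp [this]
  rw [map_add, map_smul, aeval_X, h]
  conv_lhs => enter [1]; rw [triInv]
  rw [smul_smul, Units.mul_inv, one_smul, sub_add_cancel]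

theorem tri_X_mem {R : Type*} [CommRing R] (u : ℕ → Rˣ) (p : ℕ → MvPolynomial ℕ R)
    (hp : ∀ n, (p n).vars ⊆ Finset.range n) (n : ℕ) :
    (X n : MvPolynomial ℕ R) ∈
      (aeval (R := R) fun n => (u n : R) • (X n : MvPolynomial ℕ R) + p n).range := by
  induction n using Nat.strong_induction_on with
  | _ n ih =>
    set A := (aeval (R := R) fun n => (u n : R) • (X n : MvPolynomial ℕ R) + p n).range
    have h1 : p n ∈ A := by
      have h2 : p n ∈ supported R (Set.Iio n) := by
        rw [mem_supported]
        intro i hi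
        exact Finset.mem_range.1 (hp n hi)
      have h3 : supported R (Set.Iio n) ≤ A := by
        rw [supported_eq_adjoin_X, Algebra.adjoin_le_iff]
        rintro _ ⟨i, hi, rfl⟩
        exact ih i hi
      exact h3 h2
    have h4 : (u n : R) • (X n : MvPolynomial ℕ R) + p n ∈ A := ⟨X n, by simp⟩
    have h5 := A.smul_mem (A.sub_mem h4 h1) ((u n)⁻¹ : Rˣ).val
    rwa [add_sub_cancel_right, smul_smul, Units.inv_mul, one_smul] at h5

/-- If `x n = uₙ • X n + pₙ`, where each `uₙ` is a unit and `pₙ` only involves the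
variables `X m` with `m < n`, then for every `k` the list `[x 0, x 1, …, x k]` is a
regular sequence in the polynomial ring `R[X 0, X 1, X 2, …]` (`R` a nontrivial
commutative ring). -/
theorem triangular_isRegular_sequence {R : Type*} [CommRing R] [Nontrivial R]
    (u : ℕ → Rˣ) (p : ℕ → MvPolynomial ℕ R)
    (hp : ∀ n, (p n).vars ⊆ Finset.range n) (k : ℕ) :
    RingTheory.Sequence.IsRegular (MvPolynomial ℕ R)
      ((List.range (k + 1)).map fun n => (u n : R) • X n + p n) := by
  let φ : MvPolynomial ℕ R →ₐ[R] MvPolynomial ℕ R :=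
    aeval fun n => (u n : R) • (X n : MvPolynomial ℕ R) + p n
  have hinv : ∀ f, aeval (triInv u p) (φ f) = f := by
    intro f
    have : (aeval (triInv u p)).comp φ = AlgHom.id R _ := by
      ext1 n
      simp only [φ, AlgHom.comp_apply, aeval_X, AlgHom.id_apply]
      exact triInv_spec u p hp n
    exact DFunLike.congr_fun this f
  have hsurj : Function.Surjective φ := by
    rw [← AlgHom.range_eq_top, ← top_le_iff, ← adjoin_range_X, Algebra.adjoin_le_iff]
    rintro _ ⟨n, rfl⟩
    exact tri_X_mem u p hp n
  let e : MvPolynomial ℕ R ≃+* MvPolynomial ℕ R :=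
    RingEquiv.ofBijective φ ⟨Function.LeftInverse.injective hinv, hsurj⟩
  refine (AddEquiv.isRegular_congr (e := e.toAddEquiv) ?_).1 (tri_X_isRegular R (k + 1))
  rw [List.forall₂_map_left_iff, List.forall₂_map_right_iff, List.forall₂_same]
  intro n _ f
  change φ (X n * f) = _ * φ f
  rw [map_mul]
  simp [φ]
end

section
/- Let R be a commutative ring, u : ℕ → Rˣ a sequence of units, and p : ℕ → MvPolynomial ℕ R a sequence of polynomials such that for every n the polynomial p n only involves the variables X m with m < n and has zero constant coefficient. Set x n = (u n)·(X n) + p n. Then the ideal of MvPolynomial ℕ R generated by {x n : n ∈ ℕ} equals the ideal generated by all the variables {X n : n ∈ ℕ}; consequently the quotient of MvPolynomial ℕ R by the ideal (x n : n ∈ ℕ) is isomorphic to R as an R-algebra. -/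
open MvPolynomial

theorem mem_span_X_of_vars {R : Type*} [CommRing R] (q : MvPolynomial ℕ R) (s : Set ℕ)
    (hv : ∀ i ∈ q.vars, i ∈ s) (h0 : constantCoeff q = 0) :
    q ∈ Ideal.span ((X : ℕ → MvPolynomial ℕ R) '' s) := by
  rw [mem_ideal_span_X_image]
  intro m hm
  have hne : m ≠ 0 := by
    rintro rfl
    rw [mem_support_iff] at hm
    exact hm h0
  obtain ⟨i, hi⟩ := Finsupp.support_nonempty_iff.mpr hne
  exact ⟨i, hv i ((mem_vars i).mpr ⟨m, hm, hi⟩), Finsupp.mem_support_iff.mp hi⟩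

/-- If `x n = uₙ • X n + pₙ`, where each `uₙ` is a unit and `pₙ` only involves the
variables `X m` with `m < n` and has zero constant coefficient, then the ideal
generated by the `x n` equals the ideal generated by all the variables, and the
quotient of `R[X 0, X 1, …]` by it is isomorphic to `R` as an `R`-algebra. -/
theorem triangular_span_eq_span_X_and_quotient_iso {R : Type*} [CommRing R]
    (u : ℕ → Rˣ) (p : ℕ → MvPolynomial ℕ R)
    (hp : ∀ n, (p n).vars ⊆ Finset.range n)
    (hp0 : ∀ n, constantCoeff (p n) = 0) :
    Ideal.span (Set.range fun n => (u n : R) • X n + p n) =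
      Ideal.span (Set.range (X : ℕ → MvPolynomial ℕ R)) ∧
    Nonempty
      ((MvPolynomial ℕ R ⧸
          Ideal.span (Set.range fun n => (u n : R) • X n + p n)) ≃ₐ[R] R) := by
  have key : Ideal.span (Set.range fun n => (u n : R) • X n + p n) =
      Ideal.span (Set.range (X : ℕ → MvPolynomial ℕ R)) := by
    apply le_antisymm
    · rw [Ideal.span_le]
      rintro _ ⟨n, rfl⟩
      refine Ideal.add_mem _ ?_ ?_
      · rw [smul_eq_C_mul]
        exact Ideal.mul_mem_left _ _ (Ideal.subset_span ⟨n, rfl⟩)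
      · have := mem_span_X_of_vars (p n) Set.univ (fun _ _ => trivial) (hp0 n)
        rwa [Set.image_univ] at this
    · rw [Ideal.span_le]
      rintro _ ⟨n, rfl⟩
      induction n using Nat.strong_induction_on with
      | _ n ih =>
        set I := Ideal.span (Set.range fun n => (u n : R) • X n + p n) with hI
        have h1 : p n ∈ I := by
          have h := mem_span_X_of_vars (p n) (Set.Iio n)
            (fun i hi => Finset.mem_range.mp (hp n hi)) (hp0 n)
          refine (Ideal.span_le.mpr ?_) h
          rintro _ ⟨m, hm, rfl⟩
          exact ih m hm
        have h2 : (u n : R) • X n + p n ∈ I := Ideal.subset_span ⟨n, rfl⟩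
        have h3 : (u n : R) • (X n : MvPolynomial ℕ R) ∈ I := (Ideal.add_mem_iff_left I h1).mp h2
        have h4 := Ideal.mul_mem_left I (C ((u n)⁻¹ : Rˣ).val) h3
        rw [← smul_eq_C_mul, smul_smul, Units.inv_mul, one_smul] at h4
        exact h4
  refine ⟨key, ?_⟩
  have hker : Ideal.span (Set.range fun n => (u n : R) • X n + p n) =
      RingHom.ker (aeval (fun _ => 0) : MvPolynomial ℕ R →ₐ[R] R) := by
    rw [key]
    apply le_antisymm
    · rw [Ideal.span_le]
      rintro _ ⟨n, rfl⟩
      simp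
    · intro q hq
      have h0 : constantCoeff q = 0 := by
        rw [RingHom.mem_ker] at hq
        simpa using hq
      have := mem_span_X_of_vars q Set.univ (fun _ _ => trivial) h0
      rwa [Set.image_univ] at this
  exact ⟨(Ideal.quotientEquivAlgOfEq R hker).trans
    (Ideal.quotientKerAlgEquivOfSurjective (fun r => ⟨C r, by simp⟩))⟩
end

section
/- Define a sequence of polynomials c : ℕ → P recursively by c 0 = 1 and c r = −ξ_r − Σ_{i=1}^{r−1} ξ_{r−i}^{ℓ^i} · (c i) for r ≥ 1, so that Σ_{i=0}^{r} ξ_{r−i}^{ℓ^i} · (c i) = 0 for all r ≥ 1. Then also Σ_{i=0}^{r} (c (r−i))^{ℓ^i} · ξ_i = 0 in P for all r ≥ 1. Equivalently, the 𝔽_ℓ-algebra endomorphism ι of P with ι(ξ_r) = c r is an antipode for the bialgebra (P, Δ, ε), i.e., mult ∘ (ι ⊗ id) ∘ Δ = η ∘ ε = mult ∘ (id ⊗ ι) ∘ Δ, making P a Hopf algebra over 𝔽_ℓ. -/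
open MvPolynomial TensorProduct

/-- `P`, the polynomial part of the dual motivic Steenrod algebra at `ℓ`:
the polynomial ring over `𝔽_ℓ` in variables `ξ₁, ξ₂, ξ₃, …`. -/
abbrev MilnorP (ℓ : ℕ) : Type := MvPolynomial ℕ+ (ZMod ℓ)

/-- The element `ξ_r` of `P`, with the convention `ξ₀ = 1`. -/
noncomputable def milnorXi (ℓ : ℕ) (r : ℕ) : MilnorP ℓ :=
  if h : 0 < r then X (⟨r, h⟩ : ℕ+) else 1

/-- The Milnor comultiplication `Δ : P → P ⊗ P`, the `𝔽_ℓ`-algebra homomorphism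
determined on generators by `Δ(ξ_r) = Σ_{i=0}^{r} ξ_{r−i}^{ℓ^i} ⊗ ξ_i`. -/
noncomputable def milnorDelta (ℓ : ℕ) : MilnorP ℓ →ₐ[ZMod ℓ] MilnorP ℓ ⊗[ZMod ℓ] MilnorP ℓ :=
  aeval fun r : ℕ+ =>
    ∑ i ∈ Finset.range ((r : ℕ) + 1),
      ((milnorXi ℓ ((r : ℕ) - i)) ^ (ℓ ^ i)) ⊗ₜ[ZMod ℓ] (milnorXi ℓ i)

/-- The counit `ε : P → 𝔽_ℓ`, the algebra homomorphism with `ε(ξ_r) = 0` for `r ≥ 1`. -/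
noncomputable def milnorEps (ℓ : ℕ) : MilnorP ℓ →ₐ[ZMod ℓ] ZMod ℓ :=
  aeval fun _ : ℕ+ => 0

theorem milnor_tw_assoc {R : Type*} [CommRing R] (p : ℕ) [Fact p.Prime] [CharP R p]
    (a b c : ℕ → R) (n : ℕ) :
    ∑ u ∈ Finset.HasAntidiagonal.antidiagonal n,
        (∑ v ∈ Finset.HasAntidiagonal.antidiagonal u.1, a v.1 ^ p ^ v.2 * b v.2) ^ p ^ u.2 * c u.2 =
      ∑ u ∈ Finset.HasAntidiagonal.antidiagonal n,
        a u.1 ^ p ^ u.2 * ∑ v ∈ Finset.HasAntidiagonal.antidiagonal u.2, b v.1 ^ p ^ v.2 * c v.2 := by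
  simp only [sum_pow_char_pow, Finset.sum_mul, Finset.mul_sum, Finset.sum_sigma']
  refine Finset.sum_nbij' (fun s => ⟨(s.2.1, s.2.2 + s.1.2), (s.2.2, s.1.2)⟩)
    (fun s => ⟨(s.1.1 + s.2.1, s.2.2), (s.1.1, s.2.1)⟩) ?_ ?_ ?_ ?_ ?_
  · rintro ⟨⟨i, j⟩, ⟨k, l⟩⟩ h
    simp only [Finset.mem_sigma, Finset.HasAntidiagonal.mem_antidiagonal, and_true] at h ⊢
    omega
  · rintro ⟨⟨i, j⟩, ⟨k, l⟩⟩ h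
    simp only [Finset.mem_sigma, Finset.HasAntidiagonal.mem_antidiagonal, and_true] at h ⊢
    omega
  · rintro ⟨⟨i, j⟩, ⟨k, l⟩⟩ h
    simp only [Finset.mem_sigma, Finset.HasAntidiagonal.mem_antidiagonal] at h
    obtain ⟨rfl, rfl⟩ := h
    rfl
  · rintro ⟨⟨i, j⟩, ⟨k, l⟩⟩ h
    simp only [Finset.mem_sigma, Finset.HasAntidiagonal.mem_antidiagonal] at h
    obtain ⟨rfl, rfl⟩ := h
    rfl
  · rintro ⟨⟨i, j⟩, ⟨k, l⟩⟩ h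
    simp only
    rw [mul_pow, ← pow_mul, ← pow_add, mul_assoc]

theorem milnor_sum_eq {R : Type*} [CommRing R] (p : ℕ) (a b : ℕ → R) (n : ℕ) :
    ∑ i ∈ Finset.range (n + 1), a (n - i) ^ p ^ i * b i =
      ∑ u ∈ Finset.HasAntidiagonal.antidiagonal n, a u.1 ^ p ^ u.2 * b u.2 := by
  rw [← Finset.Nat.sum_antidiagonal_swap,
    Finset.Nat.sum_antidiagonal_eq_sum_range_succ_mk]
  rfl

theorem milnor_tw_inv {R : Type*} [CommRing R] (p : ℕ) [Fact p.Prime] [CharP R p]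
    (x c : ℕ → R) (hx : x 0 = 1) (hc : c 0 = 1)
    (h : ∀ r, 1 ≤ r → ∑ i ∈ Finset.range (r + 1), x (r - i) ^ p ^ i * c i = 0) :
    ∀ r, 1 ≤ r → ∑ i ∈ Finset.range (r + 1), c (r - i) ^ p ^ i * x i = 0 := by
  have hp : p ≠ 0 := (Fact.out : p.Prime).ne_zero
  intro r
  induction r using Nat.strong_induction_on with
  | _ r ih =>
  intro hr
  have key := milnor_tw_assoc p x c x r
  simp only [← milnor_sum_eq] at key
  have e1 := milnor_sum_eq p (fun n => ∑ i ∈ Finset.range (n + 1), x (n - i) ^ p ^ i * c i) x r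
  have e2 := milnor_sum_eq p x (fun n => ∑ i ∈ Finset.range (n + 1), c (n - i) ^ p ^ i * x i) r
  rw [← e1, ← e2] at key
  rw [Finset.sum_range_succ, Finset.sum_eq_zero] at key
  · have key2 : ∑ k ∈ Finset.range r, x (r - (k + 1)) ^ p ^ (k + 1) *
        ∑ i ∈ Finset.range (k + 1 + 1), c (k + 1 - i) ^ p ^ i * x i = 0 := by
      rw [Finset.sum_range_succ' _ r] at key
      simpa [hx, hc] using key
    obtain ⟨m, rfl⟩ : ∃ m, r = m + 1 := ⟨r - 1, by omega⟩
    rw [Finset.sum_range_succ, Finset.sum_eq_zero] at key2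
    · rw [Nat.sub_self, hx, one_pow, one_mul, zero_add] at key2
      exact key2
    · intro i hi
      rw [Finset.mem_range] at hi
      rw [ih (i + 1) (by omega) (by omega), mul_zero]
  · intro i hi
    rw [Finset.mem_range] at hi
    rw [h (r - i) (by omega), zero_pow (pow_ne_zero _ hp), zero_mul]

theorem milnorXi_zero (ℓ : ℕ) : milnorXi ℓ 0 = 1 := by simp [milnorXi]

theorem milnorXi_aeval (ℓ : ℕ) (c : ℕ → MilnorP ℓ) (hc0 : c 0 = 1) (r : ℕ) :
    aeval (R := ZMod ℓ) (fun r : ℕ+ => c r) (milnorXi ℓ r) = c r := by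
  rcases Nat.eq_zero_or_pos r with rfl | h
  · simp [milnorXi, hc0]
  · rw [milnorXi, dif_pos h]
    exact aeval_X (fun r : ℕ+ => c r) (⟨r, h⟩ : ℕ+)

/-- If `c : ℕ → P` satisfies `c 0 = 1` and the recursion
`c r = −ξ_r − Σ_{i=1}^{r−1} ξ_{r−i}^{ℓ^i}·(c i)` for `r ≥ 1` (equivalently,
`Σ_{i=0}^{r} ξ_{r−i}^{ℓ^i}·(c i) = 0` for `r ≥ 1`), then also
`Σ_{i=0}^{r} (c (r−i))^{ℓ^i}·ξ_i = 0` for all `r ≥ 1`; equivalently, the algebra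
endomorphism `ι` of `P` with `ι(ξ_r) = c r` is an antipode for `(P, Δ, ε)`:
`mult ∘ (ι ⊗ id) ∘ Δ = η ∘ ε = mult ∘ (id ⊗ ι) ∘ Δ`, making `P` a Hopf algebra. -/
theorem milnor_antipode (ℓ : ℕ) (hℓ : ℓ.Prime) (c : ℕ → MilnorP ℓ)
    (hc0 : c 0 = 1)
    (hcrec : ∀ r : ℕ, 1 ≤ r →
      c r = - milnorXi ℓ r -
        ∑ i ∈ Finset.Ico 1 r, ((milnorXi ℓ (r - i)) ^ (ℓ ^ i)) * c i) :
    (∀ r : ℕ, 1 ≤ r →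
      ∑ i ∈ Finset.range (r + 1), ((c (r - i)) ^ (ℓ ^ i)) * milnorXi ℓ i = 0) ∧
    ((Algebra.TensorProduct.lmul' (ZMod ℓ) (S := MilnorP ℓ)).comp
        ((Algebra.TensorProduct.map (aeval fun r : ℕ+ => c r)
          (AlgHom.id (ZMod ℓ) (MilnorP ℓ))).comp (milnorDelta ℓ)) =
      (Algebra.ofId (ZMod ℓ) (MilnorP ℓ)).comp (milnorEps ℓ)) ∧
    ((Algebra.TensorProduct.lmul' (ZMod ℓ) (S := MilnorP ℓ)).comp
        ((Algebra.TensorProduct.map (AlgHom.id (ZMod ℓ) (MilnorP ℓ))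
          (aeval fun r : ℕ+ => c r)).comp (milnorDelta ℓ)) =
      (Algebra.ofId (ZMod ℓ) (MilnorP ℓ)).comp (milnorEps ℓ)) := by
  have := Fact.mk hℓ
  have h1 : ∀ r, 1 ≤ r →
      ∑ i ∈ Finset.range (r + 1), milnorXi ℓ (r - i) ^ ℓ ^ i * c i = 0 := by
    intro r hr
    rw [Finset.sum_range_succ, Finset.range_eq_Ico, Finset.sum_eq_sum_Ico_succ_bot (by omega)]
    have := hcrec r hr
    simp only [Nat.sub_self, milnorXi_zero, hc0, one_pow, pow_zero, pow_one, mul_one, one_mul,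
      Nat.sub_zero, zero_add]
    rw [this]
    ring
  have h2 := milnor_tw_inv ℓ (milnorXi ℓ) c (milnorXi_zero ℓ) hc0 h1
  refine ⟨h2, ?_, ?_⟩
  · apply MvPolynomial.algHom_ext
    intro r
    simp only [AlgHom.comp_apply, milnorDelta, milnorEps, aeval_X, map_sum,
      Algebra.TensorProduct.map_tmul, Algebra.TensorProduct.lmul'_apply_tmul, map_pow,
      milnorXi_aeval ℓ c hc0, AlgHom.id_apply, map_zero]
    exact h2 r r.pos
  · apply MvPolynomial.algHom_ext
    intro r
    simp only [AlgHom.comp_apply, milnorDelta, milnorEps, aeval_X, map_sum,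
      Algebra.TensorProduct.map_tmul, Algebra.TensorProduct.lmul'_apply_tmul, map_pow,
      milnorXi_aeval ℓ c hc0, AlgHom.id_apply, map_zero]
    exact h1 r r.pos
end

section
/- Let f : B → P be the 𝔽_ℓ-algebra homomorphism determined on generators by f(bₙ) = ξ_r if n = ℓ^r − 1 for some r ≥ 1, and f(bₙ) = 0 if n + 1 is not a power of ℓ. Then Δ ∘ f = (id_P ⊗ f) ∘ ψ as 𝔽_ℓ-algebra homomorphisms B → P ⊗_{𝔽_ℓ} P; that is, f is a map of left P-comodules. -/
open MvPolynomial TensorProduct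

/-- `B`, the polynomial ring over `𝔽_ℓ` in variables `b₁, b₂, b₃, …`
(the mod-`ℓ` homology of `MGL`). -/
abbrev MilnorB (ℓ : ℕ) : Type := MvPolynomial ℕ+ (ZMod ℓ)

/-- The element `b_m` of `B`, with the convention `b₀ = 1`. -/
noncomputable def milnorb (ℓ : ℕ) (m : ℕ) : MilnorB ℓ :=
  if h : 0 < m then X (⟨m, h⟩ : ℕ+) else 1

/-- `|R| = Σ_{i≥1} rᵢ·(ℓ^i − 1)` for a finitely supported sequence `R`. -/
def degR (ℓ : ℕ) (R : ℕ+ →₀ ℕ) : ℕ := R.sum fun i r => r * (ℓ ^ (i : ℕ) - 1)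

/-- The multinomial coefficient `a_{k,R} = k!/((k − Σᵢrᵢ)!·∏ᵢ rᵢ!) mod ℓ` if
`Σᵢ rᵢ ≤ k`, and `0` otherwise. -/
def aCoef (ℓ k : ℕ) (R : ℕ+ →₀ ℕ) : ZMod ℓ :=
  ((k.choose (R.sum fun _ r => r)) * Nat.multinomial R.support R : ℕ)

/-- The coaction `ψ : B → P ⊗ B`, the `𝔽_ℓ`-algebra homomorphism with
`ψ(bₙ) = Σ_{m + |R| = n} a_{m+1,R}·ξ(R) ⊗ b_m`, where `ξ(R) = ∏ᵢ ξᵢ^{rᵢ}`. -/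
noncomputable def milnorPsi (ℓ : ℕ) : MilnorB ℓ →ₐ[ZMod ℓ] MilnorP ℓ ⊗[ZMod ℓ] MilnorB ℓ :=
  aeval fun n : ℕ+ =>
    ∑ᶠ (m : ℕ) (R : ℕ+ →₀ ℕ) (_ : m + degR ℓ R = (n : ℕ)),
      aCoef ℓ (m + 1) R • ((monomial R (1 : ZMod ℓ)) ⊗ₜ[ZMod ℓ] milnorb ℓ m)

/-- The `𝔽_ℓ`-algebra homomorphism `f : B → P` with `f(bₙ) = ξ_r` if
`n = ℓ^r − 1` for some `r ≥ 1` and `f(bₙ) = 0` otherwise. -/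
noncomputable def milnorF (ℓ : ℕ) : MilnorB ℓ →ₐ[ZMod ℓ] MilnorP ℓ :=
  aeval fun n : ℕ+ =>
    ∑ᶠ (r : ℕ+) (_ : (n : ℕ) + 1 = ℓ ^ (r : ℕ)), (X r : MilnorP ℓ)

namespace MilnorAux

/-- The sequence which is `0` for `i = 0` and `ℓ^s` at place `i` for `i > 0`. -/
noncomputable def seqT (ℓ s i : ℕ) : ℕ+ →₀ ℕ :=
  if h : 0 < i then Finsupp.single (⟨i, h⟩ : ℕ+) (ℓ ^ s) else 0

theorem seqT_coe (ℓ s : ℕ) (j : ℕ+) : seqT ℓ s j = Finsupp.single j (ℓ ^ s) :=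
  dif_pos j.pos

theorem seqT_zero (ℓ s : ℕ) : seqT ℓ s 0 = 0 := rfl

theorem milnorXi_coe (ℓ : ℕ) (j : ℕ+) : milnorXi ℓ j = X j := dif_pos j.pos

theorem milnorXi_zero (ℓ : ℕ) : milnorXi ℓ 0 = 1 := rfl

theorem aCoef_ne_zero (ℓ : ℕ) (hℓ : ℓ.Prime) (s : ℕ) (R : ℕ+ →₀ ℕ)
    (h : aCoef ℓ (ℓ ^ s) R ≠ 0) : ∃ i, R = seqT ℓ s i := by
  have h1 : ¬ ℓ ∣ (ℓ ^ s).choose (R.sum fun _ r => r) * Nat.multinomial R.support R := by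
    intro hd
    exact h ((ZMod.natCast_eq_zero_iff _ _).2 hd)
  have h2 : ¬ ℓ ∣ (ℓ ^ s).choose (R.sum fun _ r => r) := fun hd => h1 (hd.mul_right _)
  have h3 : ¬ ℓ ∣ Nat.multinomial R.support R := fun hd => h1 (hd.mul_left _)
  by_cases hR : R = 0
  · exact ⟨0, by simp [seqT, hR]⟩
  obtain ⟨j, hj⟩ := Finsupp.support_nonempty_iff.2 hR
  have hj0 : R j ≠ 0 := Finsupp.mem_support_iff.1 hj
  have hle : R j ≤ R.sum fun _ r => r :=
    Finset.single_le_sum (f := fun i => R i) (fun _ _ => Nat.zero_le _) hj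
  have hsum : (R.sum fun _ r => r) = ℓ ^ s := by
    by_contra hne
    exact h2 (hℓ.dvd_choose_pow (by omega) hne)
  have hu := Finsupp.multinomial_update j R
  have hRj : R j = ℓ ^ s := by
    by_contra hne
    apply h3
    rw [← Finsupp.multinomial_eq, hu]
    refine Dvd.dvd.mul_right ?_ _
    have : (R.sum fun _ => id) = ℓ ^ s := hsum
    rw [this]
    exact hℓ.dvd_choose_pow hj0 hne
  refine ⟨j, ?_⟩
  rw [seqT_coe]
  ext k
  by_cases hk : k = j
  · subst hk; simp [hRj]
  · rw [Finsupp.single_eq_of_ne hk]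
    by_contra hne
    have hks : k ∈ R.support := Finsupp.mem_support_iff.2 hne
    have : R k + R j ≤ R.sum fun _ r => r := by
      have := Finset.sum_le_sum_of_subset (f := fun i => R i)
        (s := {k, j}) (t := R.support) (by
          intro x hx
          simp only [Finset.mem_insert, Finset.mem_singleton] at hx
          rcases hx with rfl | rfl <;> assumption)
      rwa [Finset.sum_pair hk] at this
    omega

theorem aCoef_seqT (ℓ s i : ℕ) : aCoef ℓ (ℓ ^ s) (seqT ℓ s i) = 1 := by
  rcases Nat.eq_zero_or_pos i with rfl | h
  · simp [seqT_zero, aCoef]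
  · lift i to ℕ+ using h
    rw [seqT_coe, aCoef]
    have : Nat.multinomial (Finsupp.single i (ℓ ^ s)).support
        (Finsupp.single i (ℓ ^ s)) = 1 := by
      rw [Finsupp.single_eq_pi_single]
      exact Nat.multinomial_single ..
    rw [this]
    simp

theorem degR_seqT (ℓ : ℕ) (hℓ : ℓ.Prime) (s i : ℕ) :
    ℓ ^ s - 1 + degR ℓ (seqT ℓ s i) + 1 = ℓ ^ (s + i) := by
  have h1 : 1 ≤ ℓ ^ s := Nat.one_le_pow _ _ hℓ.pos
  have h2 : 1 ≤ ℓ ^ i := Nat.one_le_pow _ _ hℓ.pos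
  rcases Nat.eq_zero_or_pos i with rfl | h
  · simp [seqT_zero, degR]; omega
  · lift i to ℕ+ using h
    rw [seqT_coe, degR, Finsupp.sum_single_index (by simp), pow_add]
    zify [h1, h2]
    ring

theorem monomial_seqT (ℓ s i : ℕ) :
    (monomial (seqT ℓ s i) (1 : ZMod ℓ)) = milnorXi ℓ i ^ (ℓ ^ s) := by
  rcases Nat.eq_zero_or_pos i with rfl | h
  · simp [seqT_zero, milnorXi_zero]
  · lift i to ℕ+ using h
    rw [seqT_coe, milnorXi_coe, X_pow_eq_monomial]

theorem seqT_deg_eq_iff (ℓ : ℕ) (hℓ : ℓ.Prime) (s i n : ℕ) :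
    ℓ ^ s - 1 + degR ℓ (seqT ℓ s i) = n ↔ n + 1 = ℓ ^ (s + i) := by
  have := degR_seqT ℓ hℓ s i
  omega

theorem finite_degR (ℓ : ℕ) (hℓ : ℓ.Prime) (n : ℕ) :
    {R : ℕ+ →₀ ℕ | degR ℓ R ≤ n}.Finite := by
  refine (Set.finite_Iic
    (Finsupp.indicator (Finset.Icc 1 n.succPNat) (fun _ _ => n) : ℕ+ →₀ ℕ)).subset ?_
  intro R hR
  rw [Set.mem_Iic]
  intro i
  by_cases h0 : R i = 0
  · simp [h0]
  have hle : R i * (ℓ ^ (i : ℕ) - 1) ≤ degR ℓ R :=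
    Finset.single_le_sum (f := fun i : ℕ+ => R i * (ℓ ^ (i : ℕ) - 1))
      (fun _ _ => Nat.zero_le _) (Finsupp.mem_support_iff.2 h0)
  have hi : (i : ℕ) < ℓ ^ (i : ℕ) := Nat.lt_pow_self hℓ.one_lt
  have hi1 : 1 ≤ (i : ℕ) := i.pos
  have hR' : degR ℓ R ≤ n := hR
  have a1 : R i ≤ n := by
    have : R i * 1 ≤ R i * (ℓ ^ (i : ℕ) - 1) := Nat.mul_le_mul_left _ (by omega)
    omega
  have a2 : (i : ℕ) ≤ n := by
    have : 1 * (ℓ ^ (i : ℕ) - 1) ≤ R i * (ℓ ^ (i : ℕ) - 1) :=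
      Nat.mul_le_mul_right _ (by omega)
    omega
  have hm : i ∈ Finset.Icc 1 n.succPNat := by
    rw [Finset.mem_Icc]
    refine ⟨one_le, ?_⟩
    rw [← PNat.coe_le_coe, Nat.succPNat_coe]
    omega
  rw [Finsupp.indicator_of_mem hm]
  exact a1

theorem milnorF_X_pow (ℓ : ℕ) (hℓ : ℓ.Prime) (n r : ℕ+) (h : (n : ℕ) + 1 = ℓ ^ (r : ℕ)) :
    milnorF ℓ (X n) = X r := by
  unfold milnorF
  rw [aeval_X, finsum_eq_single _ r]
  · simp [h]
  · intro x hx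
    have : ¬ ((n : ℕ) + 1 = ℓ ^ (x : ℕ)) := by
      intro h'
      exact hx (PNat.coe_injective (Nat.pow_right_injective hℓ.two_le (h'.symm.trans h)))
    simp [this]

theorem milnorF_X_zero (ℓ : ℕ) (n : ℕ+) (h : ∀ r : ℕ, (n : ℕ) + 1 ≠ ℓ ^ r) :
    milnorF ℓ (X n) = 0 := by
  unfold milnorF
  rw [aeval_X]
  simp [h]

theorem milnorF_b_pow (ℓ : ℕ) (hℓ : ℓ.Prime) (s : ℕ) :
    milnorF ℓ (milnorb ℓ (ℓ ^ s - 1)) = milnorXi ℓ s := by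
  by_cases hs : 0 < s
  · have h1 : s < ℓ ^ s := Nat.lt_pow_self hℓ.one_lt
    have h2 : 0 < ℓ ^ s - 1 := by omega
    rw [milnorb, milnorXi, dif_pos hs, dif_pos h2]
    apply milnorF_X_pow ℓ hℓ
    simp only [PNat.mk_coe]
    omega
  · have : s = 0 := by omega
    subst this
    simp [milnorb, milnorXi]

theorem milnorF_b_zero (ℓ : ℕ) (m : ℕ) (h : ∀ r : ℕ, m + 1 ≠ ℓ ^ r) :
    milnorF ℓ (milnorb ℓ m) = 0 := by
  by_cases hm : 0 < m
  · rw [milnorb, dif_pos hm]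
    exact milnorF_X_zero ℓ _ h
  · exact absurd (by simp; omega) (h 0)

/-- The image of `ψ(bₙ)` under `id ⊗ f`, term by term. -/
theorem map_psi (ℓ : ℕ) (hℓ : ℓ.Prime) (n : ℕ+) :
    (Algebra.TensorProduct.map (AlgHom.id (ZMod ℓ) (MilnorP ℓ)) (milnorF ℓ))
      (milnorPsi ℓ (X n)) =
    ∑ᶠ (m : ℕ) (R : ℕ+ →₀ ℕ) (_ : m + degR ℓ R = (n : ℕ)),
      aCoef ℓ (m + 1) R •
        ((monomial R (1 : ZMod ℓ) : MilnorP ℓ) ⊗ₜ[ZMod ℓ] milnorF ℓ (milnorb ℓ m)) := by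
  set G : MilnorP ℓ ⊗[ZMod ℓ] MilnorB ℓ →+ MilnorP ℓ ⊗[ZMod ℓ] MilnorP ℓ :=
    ((Algebra.TensorProduct.map (AlgHom.id (ZMod ℓ) (MilnorP ℓ)) (milnorF ℓ)) :
      MilnorP ℓ ⊗[ZMod ℓ] MilnorB ℓ →+ MilnorP ℓ ⊗[ZMod ℓ] MilnorP ℓ) with hG
  change G (milnorPsi ℓ (X n)) = _
  unfold milnorPsi
  rw [aeval_X, AddMonoidHom.map_finsum]
  · refine finsum_congr fun m => ?_
    rw [AddMonoidHom.map_finsum]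
    · refine finsum_congr fun R => ?_
      rw [AddMonoidHom.map_finsum_Prop]
      refine finsum_congr fun h => ?_
      simp [hG]
    · refine (finite_degR ℓ hℓ n).subset ?_
      intro R hR
      rw [Function.mem_support] at hR
      by_contra hc
      apply hR
      have : ¬ (m + degR ℓ R = (n : ℕ)) := by
        intro h'
        apply hc
        change degR ℓ R ≤ n
        omega
      simp [this]
  · refine (Set.finite_Iic (n : ℕ)).subset ?_
    intro m hm
    rw [Function.mem_support] at hm
    by_contra hc
    apply hm
    rw [Set.mem_Iic] at hc
    have : ∀ R, ¬ (m + degR ℓ R = (n : ℕ)) := by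
      intro R
      omega
    simp [this]

/-- The inner sum. -/
theorem inner_pow (ℓ : ℕ) (hℓ : ℓ.Prime) (n s i : ℕ) (h : n + 1 = ℓ ^ (s + i)) :
    (∑ᶠ (R : ℕ+ →₀ ℕ) (_ : (ℓ ^ s - 1) + degR ℓ R = n),
      aCoef ℓ (ℓ ^ s - 1 + 1) R •
        ((monomial R (1 : ZMod ℓ) : MilnorP ℓ) ⊗ₜ[ZMod ℓ] milnorF ℓ (milnorb ℓ (ℓ ^ s - 1)))) =
      (milnorXi ℓ i ^ (ℓ ^ s)) ⊗ₜ[ZMod ℓ] milnorXi ℓ s := by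
  have hs : ℓ ^ s - 1 + 1 = ℓ ^ s := Nat.sub_add_cancel (Nat.one_le_pow _ _ hℓ.pos)
  rw [hs, milnorF_b_pow ℓ hℓ, finsum_eq_single _ (seqT ℓ s i)]
  · have := (seqT_deg_eq_iff ℓ hℓ s i n).2 h
    rw [finsum_eq_if, if_pos this, aCoef_seqT, one_smul, monomial_seqT]
  · intro R hR
    by_cases hd : (ℓ ^ s - 1) + degR ℓ R = n
    · have : aCoef ℓ (ℓ ^ s) R = 0 := by
        by_contra hne
        obtain ⟨j, rfl⟩ := aCoef_ne_zero ℓ hℓ s R hne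
        have h' := (seqT_deg_eq_iff ℓ hℓ s j n).1 hd
        have := Nat.pow_right_injective hℓ.two_le (h.symm.trans h')
        exact hR (by congr 1; omega)
      simp [this]
    · simp [hd]

theorem inner_zero (ℓ : ℕ) (hℓ : ℓ.Prime) (n m : ℕ)
    (h : ∀ s i, n + 1 = ℓ ^ (s + i) → m ≠ ℓ ^ s - 1) :
    (∑ᶠ (R : ℕ+ →₀ ℕ) (_ : m + degR ℓ R = n),
      aCoef ℓ (m + 1) R •
        ((monomial R (1 : ZMod ℓ) : MilnorP ℓ) ⊗ₜ[ZMod ℓ] milnorF ℓ (milnorb ℓ m))) = 0 := by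
  by_cases hm : ∃ s, m + 1 = ℓ ^ s
  · obtain ⟨s, hs⟩ := hm
    have hms : m = ℓ ^ s - 1 := by omega
    have key : ∀ R, m + degR ℓ R = n → aCoef ℓ (m + 1) R = 0 := by
      intro R hd
      by_contra hne
      rw [hs] at hne
      obtain ⟨j, rfl⟩ := aCoef_ne_zero ℓ hℓ s R hne
      rw [hms] at hd
      exact h s j ((seqT_deg_eq_iff ℓ hℓ s j n).1 hd) hms
    refine (finsum_congr fun R => ?_).trans finsum_zero
    refine (finsum_congr fun hd => ?_).trans finsum_zero
    rw [key R hd, zero_smul]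
  · push Not at hm
    rw [milnorF_b_zero ℓ m hm]
    simp

end MilnorAux

open MilnorAux in
/-- `f` is a map of left `P`-comodules: `Δ ∘ f = (id_P ⊗ f) ∘ ψ`. -/
theorem milnorF_comodule_map (ℓ : ℕ) (hℓ : ℓ.Prime) :
    (milnorDelta ℓ).comp (milnorF ℓ) =
      (Algebra.TensorProduct.map (AlgHom.id (ZMod ℓ) (MilnorP ℓ)) (milnorF ℓ)).comp
        (milnorPsi ℓ) := by

  refine MvPolynomial.algHom_ext fun n => ?_
  rw [AlgHom.comp_apply, AlgHom.comp_apply, map_psi ℓ hℓ n]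
  by_cases hn : ∃ r : ℕ, (n : ℕ) + 1 = ℓ ^ r
  · obtain ⟨r, hr⟩ := hn
    have hr0 : 0 < r := by
      rcases Nat.eq_zero_or_pos r with rfl | h
      · have := n.pos
        simp at hr
      · exact h
    lift r to ℕ+ using hr0
    rw [milnorF_X_pow ℓ hℓ n r hr, milnorDelta, aeval_X]
    have hinj : Function.Injective fun s : ℕ => ℓ ^ s - 1 := by
      intro a b hab
      have h1 : 1 ≤ ℓ ^ a := Nat.one_le_pow _ _ hℓ.pos
      have h2 : 1 ≤ ℓ ^ b := Nat.one_le_pow _ _ hℓ.pos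
      apply Nat.pow_right_injective hℓ.two_le
      simp only at hab ⊢
      omega
    rw [finsum_eq_sum_of_support_subset
      (s := (Finset.range ((r : ℕ) + 1)).image fun s : ℕ => ℓ ^ s - 1)]
    · rw [Finset.sum_image hinj.injOn]
      refine Finset.sum_congr rfl fun s hs => ?_
      have hs' : s < r + 1 := Finset.mem_range.1 hs
      rw [inner_pow ℓ hℓ n s (r - s) (by rw [hr]; congr 1; omega)]
    · intro m hm
      rw [Function.mem_support] at hm
      by_contra hc
      apply hm
      apply inner_zero ℓ hℓ
      intro s i hsi hms
      apply hc
      have := Nat.pow_right_injective hℓ.two_le (hr.symm.trans hsi)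
      rw [Finset.coe_image]
      exact ⟨s, by simp; omega, hms.symm⟩
  · push Not at hn
    rw [milnorF_X_zero ℓ n hn, map_zero]
    refine ((finsum_congr fun m => ?_).trans finsum_zero).symm
    exact inner_zero ℓ hℓ n m fun s i hsi => absurd hsi (hn _)
end
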